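/- Soundness: For every formula φ of the language Φ, if ⊢ φ (φ is a theorem of the logical system of doxastic strategies), then w ⊨ φ for each state w of an arbitrary game. -/

import Mathlib

/- Language: formulas over atomic propositions P, data variables V, actors 𝒜 = A.
   `bel T X φ` is B^T_X φ ; `str C T X φ` is [C]^T_X φ. -/
inductive Formula (P V A : Type) : Type
  | atom : P → Formula P V A
  | neg : Formula P V A → Formula P V A
  | imp : Formula P V A → Formula P V A → Formula P V A
  | bel : Set V → Set V → Formula P V A → Formula P V A
  | str : Set A → Set V → Set V → Formula P V A → Formula P V A

variable {P V A : Type}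

/-- Propositional tautologies: true under every valuation respecting ¬ and →. -/
def Tautology (φ : Formula P V A) : Prop :=
  ∀ v : Formula P V A → Prop,
    (∀ ψ, v (Formula.neg ψ) ↔ ¬ v ψ) →
    (∀ ψ χ, v (Formula.imp ψ χ) ↔ (v ψ → v χ)) →
    v φ

/-- Theorems of the logical system of doxastic strategies. -/
inductive Thm : Formula P V A → Prop
  | taut {φ : Formula P V A} : Tautology φ → Thm φ
  | truth {X : Set V} {φ : Formula P V A} :
      Thm (Formula.imp (Formula.bel ∅ X φ) φ)
  | negIntro {T X : Set V} {φ : Formula P V A} :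
      Thm (Formula.imp (Formula.neg (Formula.bel T X φ))
        (Formula.bel ∅ X (Formula.neg (Formula.bel T X φ))))
  | distrib {T X : Set V} {φ ψ : Formula P V A} :
      Thm (Formula.imp (Formula.bel T X (Formula.imp φ ψ))
        (Formula.imp (Formula.bel T X φ) (Formula.bel T X ψ)))
  | trust {T X Y : Set V} {φ : Formula P V A} :
      Thm (Formula.bel T X (Formula.imp (Formula.bel T Y φ) φ))
  | monoB {T T' X X' : Set V} {φ : Formula P V A} :
      T ⊆ T' → X ⊆ X' →
      Thm (Formula.imp (Formula.bel T X φ) (Formula.bel T' X' φ))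
  | monoS {C C' : Set A} {T T' X X' : Set V} {φ : Formula P V A} :
      T ⊆ T' → X ⊆ X' → C ⊆ C' →
      Thm (Formula.imp (Formula.str C T X φ) (Formula.str C' T' X' φ))
  | coop {C D : Set A} {T X : Set V} {φ ψ : Formula P V A} :
      C ∩ D = ∅ →
      Thm (Formula.imp (Formula.str C T X (Formula.imp φ ψ))
        (Formula.imp (Formula.str D T X φ) (Formula.str (C ∪ D) T X ψ)))
  | strIntro₁ {C : Set A} {T X : Set V} {φ : Formula P V A} :
      Thm (Formula.imp (Formula.str C T X φ) (Formula.bel T X (Formula.str C T X φ)))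
  | strIntro₂ {C : Set A} {T X : Set V} {φ : Formula P V A} :
      Thm (Formula.imp (Formula.bel T X (Formula.str C T X φ)) (Formula.str C T X φ))
  | unavoid {T X Y : Set V} {φ : Formula P V A} :
      Thm (Formula.imp (Formula.bel T X (Formula.str ∅ T Y φ)) (Formula.str ∅ T X φ))
  | pub {T : Set V} {φ : Formula P V A} :
      Thm (Formula.imp (Formula.bel T ∅ φ) (Formula.str ∅ T ∅ φ))
  | mp {φ ψ : Formula P V A} : Thm (Formula.imp φ ψ) → Thm φ → Thm ψ
  | nec {φ : Formula P V A} : Thm φ → Thm (Formula.bel ∅ ∅ φ)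

/-- `Deduces F φ`: φ is derivable from F together with the theorems using only Modus Ponens. -/
inductive Deduces (F : Set (Formula P V A)) : Formula P V A → Prop
  | thm {φ : Formula P V A} : Thm φ → Deduces F φ
  | mem {φ : Formula P V A} : φ ∈ F → Deduces F φ
  | mp {φ ψ : Formula P V A} :
      Deduces F (Formula.imp φ ψ) → Deduces F φ → Deduces F ψ

def Consistent (F : Set (Formula P V A)) : Prop :=
  ¬ ∃ φ : Formula P V A, Deduces F φ ∧ Deduces F (Formula.neg φ)

def MaximalConsistent (F : Set (Formula P V A)) : Prop :=
  Consistent F ∧ ∀ G : Set (Formula P V A), Consistent G → F ⊆ G → F = G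

/-- A game. -/
structure Game (P V A : Type) : Type 1 where
  W : Type
  sim : V → W → W → Prop
  sim_equiv : ∀ x : V, Equivalence (sim x)
  trust : W → Set V
  Δ : Type
  delta_nonempty : Nonempty Δ
  M : W → (A → Δ) → W → Prop
  pi : P → Set W

/-- `w ∼_X u`. -/
def Game.simSet (G : Game P V A) (X : Set V) (w u : G.W) : Prop :=
  ∀ x ∈ X, G.sim x w u

/-- The satisfaction relation `w ⊨ φ` (as `Sat G φ w`). -/
def Sat (G : Game P V A) : Formula P V A → G.W → Prop
  | Formula.atom p, w => w ∈ G.pi p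
  | Formula.neg φ, w => ¬ Sat G φ w
  | Formula.imp φ ψ, w => Sat G φ w → Sat G ψ w
  | Formula.bel T X φ, w =>
      ∀ u : G.W, G.simSet X w u → T ⊆ G.trust u → Sat G φ u
  | Formula.str C T X φ, w =>
      ∃ s : {a : A // a ∈ C} → G.Δ,
        ∀ (u v : G.W) (δ : A → G.Δ),
          G.simSet X w u → T ⊆ G.trust u →
          (∀ (a : A) (h : a ∈ C), s ⟨a, h⟩ = δ a) →
          G.M u δ v → T ⊆ G.trust v → Sat G φ v

/- ===================== Canonical game ===================== -/

/-- One block `X_i, b_i, T_i, F_i` of a canonical state. -/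
structure Block (P V A B : Type) where
  X : Set V
  b : B
  T : Set V
  F : Set (Formula P V A)

variable {B : Type}

/-- `F(w)`: the last set of formulae of the sequence (or `F0` for the root). -/
def cF (F0 : Set (Formula P V A)) (l : List (Block P V A B)) : Set (Formula P V A) :=
  l.getLast?.elim F0 Block.F

/-- `𝒯_w = T(w)`: the last dataset of the sequence (or `T0` for the root). -/
def cTrust (T0 : Set V) (l : List (Block P V A B)) : Set V :=
  l.getLast?.elim T0 Block.T

/-- Membership of a sequence in the set of canonical states `W`. -/
inductive IsState (T0 : Set V) (F0 : Set (Formula P V A)) :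
    List (Block P V A B) → Prop
  | nil :
      (∀ (Y : Set V) (ψ : Formula P V A),
        Formula.imp (Formula.bel T0 Y ψ) ψ ∈ F0) →
      IsState T0 F0 []
  | snoc {l : List (Block P V A B)} {bl : Block P V A B} :
      IsState T0 F0 l →
      MaximalConsistent bl.F →
      (∀ φ : Formula P V A, Formula.bel ∅ bl.X φ ∈ cF F0 l → φ ∈ bl.F) →
      (∀ (Y : Set V) (ψ : Formula P V A),
        Formula.imp (Formula.bel bl.T Y ψ) ψ ∈ bl.F) →
      IsState T0 F0 (l ++ [bl])

/-- The canonical states. -/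
def CState (T0 : Set V) (F0 : Set (Formula P V A)) (B : Type) : Type :=
  {l : List (Block P V A B) // IsState T0 F0 l}

attribute [local instance] Classical.propDecidable

/-- Length of the longest common prefix of two sequences. -/
noncomputable def cpl {α : Type} : List α → List α → Nat
  | a :: as, b :: bs => if a = b then cpl as bs + 1 else 0
  | _, _ => 0

/-- The blocks labelling the edges on the unique simple path between two
nodes of the canonical tree. -/
noncomputable def pathBlocks (w u : List (Block P V A B)) : List (Block P V A B) :=
  w.drop (cpl w u) ++ u.drop (cpl w u)

/-- `w ∼_x u` in the canonical game: every edge along the unique simple path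
between `w` and `u` is labelled with `x`. -/
def csimVar (x : V) (w u : List (Block P V A B)) : Prop :=
  ∀ bl ∈ pathBlocks w u, x ∈ bl.X

/-- `w ∼_X u` in the canonical game. -/
def csim (X : Set V) (w u : List (Block P V A B)) : Prop :=
  ∀ x ∈ X, csimVar x w u

/-- The canonical mechanism `M`. -/
def Mech (T0 : Set V) (F0 : Set (Formula P V A))
    (w : CState T0 F0 B) (δ : A → Formula P V A × CState T0 F0 B)
    (v : CState T0 F0 B) : Prop :=
  ∀ (C : Set A) (T X : Set V) (φ : Formula P V A),
    Formula.str C T X φ ∈ cF F0 w.1 →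
    (∀ a ∈ C, (δ a).1 = φ) →
    (∀ a ∈ C, csim X w.1 (δ a).2.1) →
    T ⊆ cTrust T0 w.1 → T ⊆ cTrust T0 v.1 →
    φ ∈ cF F0 v.1

/-- Satisfaction `w ⊨ φ` on the canonical game (as `CSat T0 F0 φ w`). -/
def CSat (T0 : Set V) (F0 : Set (Formula P V A)) :
    Formula P V A → CState T0 F0 B → Prop
  | Formula.atom p, w => Formula.atom p ∈ cF F0 w.1
  | Formula.neg φ, w => ¬ CSat T0 F0 φ w
  | Formula.imp φ ψ, w => CSat T0 F0 φ w → CSat T0 F0 ψ w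
  | Formula.bel T X φ, w =>
      ∀ u : CState T0 F0 B, csim X w.1 u.1 → T ⊆ cTrust T0 u.1 → CSat T0 F0 φ u
  | Formula.str C T X φ, w =>
      ∃ s : {a : A // a ∈ C} → Formula P V A × CState T0 F0 B,
        ∀ (u v : CState T0 F0 B) (δ : A → Formula P V A × CState T0 F0 B),
          csim X w.1 u.1 → T ⊆ cTrust T0 u.1 →
          (∀ (a : A) (h : a ∈ C), s ⟨a, h⟩ = δ a) →
          Mech T0 F0 u δ v → T ⊆ cTrust T0 v.1 → CSat T0 F0 φ v

/- ===================== Harmony ===================== -/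

/-- Conjunction definable from ¬ and →. -/
def fand (φ ψ : Formula P V A) : Formula P V A :=
  Formula.neg (Formula.imp φ (Formula.neg ψ))

/-- A canonical tautology (verum). -/
noncomputable def verum (P V A : Type) [Nonempty (Formula P V A)] : Formula P V A :=
  Formula.imp (Classical.arbitrary (Formula P V A)) (Classical.arbitrary (Formula P V A))

/-- Conjunction of a finite list of formulae. -/
noncomputable def conjList [Nonempty (Formula P V A)] :
    List (Formula P V A) → Formula P V A
  | [] => verum P V A
  | φ :: l => fand φ (conjList l)

/-- The pair `(F, G)` is in `T`-harmony: `F ⊬ [∅]^T_V ¬⋀G'` for each finite `G' ⊆ G`. -/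
def THarmony [Nonempty (Formula P V A)] (T : Set V)
    (F G : Set (Formula P V A)) : Prop :=
  ∀ l : List (Formula P V A), (∀ ψ ∈ l, ψ ∈ G) →
    ¬ Deduces F (Formula.str ∅ T (Set.univ : Set V) (Formula.neg (conjList l)))

/-! Belief and strategic ability are operators on arbitrary state predicates that only depend on
the `∼_X`-class of the current state. Since the set of actions is nonempty, a strategy of a
coalition extends to a complete action profile of which only the restriction to the coalition
matters; strategies of disjoint coalitions are then combined by gluing complete profiles. -/

namespace Game

variable {G : Game P V A} {T T' X X' Y : Set V} {C C' D : Set A} {S R : G.W → Prop} {w u : G.W}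
  {σ τ : A → G.Δ}

theorem simSet_equivalence (G : Game P V A) (X : Set V) : Equivalence (G.simSet X) where
  refl w x _ := (G.sim_equiv x).refl w
  symm h x hx := (G.sim_equiv x).symm (h x hx)
  trans h h' x hx := (G.sim_equiv x).trans (h x hx) (h' x hx)

theorem simSet.anti (h : G.simSet X' w u) (hX : X ⊆ X') : G.simSet X w u :=
  fun x hx => h x (hX hx)

theorem simSet_congr_left (h : G.simSet X w u) (v : G.W) : G.simSet X w v ↔ G.simSet X u v :=
  ⟨(G.simSet_equivalence X).trans ((G.simSet_equivalence X).symm h),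
    (G.simSet_equivalence X).trans h⟩

/-- The belief operator `B^T_X` on state predicates: `S` holds in every state that is
`X`-indistinguishable from `w` and in which the dataset `T` is trustworthy. -/
def Believes (G : Game P V A) (T X : Set V) (S : G.W → Prop) (w : G.W) : Prop :=
  ∀ u, G.simSet X w u → T ⊆ G.trust u → S u

theorem believes_congr (h : G.simSet X w u) : G.Believes T X S w ↔ G.Believes T X S u := by
  simp only [Believes, simSet_congr_left h]

theorem believes_of_forall (h : ∀ u, S u) : G.Believes T X S w :=
  fun u _ _ => h u

theorem Believes.holds (h : G.Believes T X S w) (hw : T ⊆ G.trust w) : S w :=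
  h w ((G.simSet_equivalence X).refl w) hw

theorem Believes.mono (h : G.Believes T X S w) (hT : T ⊆ T') (hX : X ⊆ X') :
    G.Believes T' X' S w :=
  fun u hu htu => h u (hu.anti hX) (hT.trans htu)

theorem Believes.mp (h : G.Believes T X (fun u => S u → R u) w) (hS : G.Believes T X S w) :
    G.Believes T X R w :=
  fun u hu htu => h u hu htu (hS u hu htu)

theorem believes_believes_imp : G.Believes T X (fun u => G.Believes T Y S u → S u) w :=
  fun _ _ htu h => h.holds htu

theorem believes_not_believes (h : ¬ G.Believes T X S w) :
    G.Believes T' X (fun u => ¬ G.Believes T X S u) w :=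
  fun _ hu _ => (believes_congr hu).not.mp h

/-- The profile `σ` is a witness for `[C]^T_X S` at `w`: whenever the members of `C` act as in `σ`,
every trustworthy transition from a trustworthy state `X`-indistinguishable from `w` leads to `S`.
The values of `σ` outside `C` are irrelevant. -/
def Enforces (G : Game P V A) (σ : A → G.Δ) (C : Set A) (T X : Set V) (S : G.W → Prop) (w : G.W) :
    Prop :=
  ∀ u v δ, G.simSet X w u → T ⊆ G.trust u → Set.EqOn σ δ C → G.M u δ v → T ⊆ G.trust v → S v

theorem enforces_congr (h : G.simSet X w u) :
    G.Enforces σ C T X S w ↔ G.Enforces σ C T X S u := by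
  simp only [Enforces, simSet_congr_left h]

theorem Enforces.congr_profile (h : G.Enforces σ C T X S w) (hστ : Set.EqOn σ τ C) :
    G.Enforces τ C T X S w :=
  fun u v δ hu htu hδ => h u v δ hu htu (hστ.trans hδ)

theorem Enforces.mono (h : G.Enforces σ C T X S w) (hC : C ⊆ C') (hT : T ⊆ T') (hX : X ⊆ X') :
    G.Enforces σ C' T' X' S w :=
  fun u v δ hu htu hδ hM htv =>
    h u v δ (hu.anti hX) (hT.trans htu) (hδ.mono hC) hM (hT.trans htv)

theorem Enforces.mono_coalition (h : G.Enforces σ C T X S w) (hC : C ⊆ C') :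
    G.Enforces σ C' T X S w :=
  h.mono hC subset_rfl subset_rfl

theorem Enforces.mp (h : G.Enforces σ C T X (fun v => S v → R v) w)
    (hS : G.Enforces σ C T X S w) : G.Enforces σ C T X R w :=
  fun u v δ hu htu hδ hM htv => h u v δ hu htu hδ hM htv (hS u v δ hu htu hδ hM htv)

/-- The strategic operator `[C]^T_X` on state predicates. The witness is a complete action profile
rather than a profile of `C`; see `sat_str` for the equivalence. -/
def CanEnforce (G : Game P V A) (C : Set A) (T X : Set V) (S : G.W → Prop) (w : G.W) : Prop :=
  ∃ σ, G.Enforces σ C T X S w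

theorem canEnforce_congr (h : G.simSet X w u) :
    G.CanEnforce C T X S w ↔ G.CanEnforce C T X S u :=
  exists_congr fun _ => enforces_congr h

theorem CanEnforce.mono (h : G.CanEnforce C T X S w) (hC : C ⊆ C') (hT : T ⊆ T') (hX : X ⊆ X') :
    G.CanEnforce C' T' X' S w :=
  h.imp fun _ hσ => hσ.mono hC hT hX

theorem CanEnforce.mp (hCD : Disjoint C D) (h : G.CanEnforce C T X (fun v => S v → R v) w)
    (hS : G.CanEnforce D T X S w) : G.CanEnforce (C ∪ D) T X R w := by
  classical
  obtain ⟨σ, hσ⟩ := h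
  obtain ⟨τ, hτ⟩ := hS
  have eqOn_C : Set.EqOn σ (C.piecewise σ τ) C := (C.piecewise_eqOn σ τ).symm
  have eqOn_D : Set.EqOn τ (C.piecewise σ τ) D :=
    ((C.piecewise_eqOn_compl σ τ).mono hCD.subset_compl_left).symm
  exact ⟨C.piecewise σ τ, ((hσ.congr_profile eqOn_C).mono_coalition Set.subset_union_left).mp
    ((hτ.congr_profile eqOn_D).mono_coalition Set.subset_union_right)⟩

theorem nonempty_profile (G : Game P V A) : Nonempty (A → G.Δ) :=
  have := G.delta_nonempty
  inferInstance

theorem canEnforce_of_forall_not_trust (h : ∀ u, G.simSet X w u → ¬ T ⊆ G.trust u) :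
    G.CanEnforce C T X S w :=
  G.nonempty_profile.elim fun σ => ⟨σ, fun u _ _ hu htu => absurd htu (h u hu)⟩

theorem canEnforce_empty_iff : G.CanEnforce ∅ T X S w ↔
    ∀ u v δ, G.simSet X w u → T ⊆ G.trust u → G.M u δ v → T ⊆ G.trust v → S v := by
  have := G.nonempty_profile
  simp only [CanEnforce, Enforces, Set.eqOn_empty, true_imp_iff, exists_const]

theorem believes_canEnforce_iff :
    G.Believes T X (G.CanEnforce C T X S) w ↔ G.CanEnforce C T X S w := by
  refine ⟨fun h => ?_, fun h u hu _ => (canEnforce_congr hu).mp h⟩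
  by_cases hex : ∃ u, G.simSet X w u ∧ T ⊆ G.trust u
  · obtain ⟨u, hu, htu⟩ := hex
    exact (canEnforce_congr hu).mpr (h u hu htu)
  · exact canEnforce_of_forall_not_trust fun u hu htu => hex ⟨u, hu, htu⟩

theorem Believes.canEnforce_empty (h : G.Believes T X (G.CanEnforce ∅ T Y S) w) :
    G.CanEnforce ∅ T X S w :=
  canEnforce_empty_iff.mpr fun u v δ hu htu =>
    canEnforce_empty_iff.mp (h u hu htu) u v δ ((G.simSet_equivalence Y).refl u) htu

theorem canEnforce_empty_of_believes_empty (h : G.Believes T ∅ S w) :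
    G.CanEnforce ∅ T X S w :=
  canEnforce_empty_iff.mpr fun _ v _ _ _ _ htv => h v (fun _ hx => hx.elim) htv

end Game

section Sat

variable (G : Game P V A) (φ ψ : Formula P V A) (C : Set A) (T X : Set V)

theorem sat_neg : Sat G φ.neg = fun w => ¬ Sat G φ w := rfl

theorem sat_imp : Sat G (φ.imp ψ) = fun w => Sat G φ w → Sat G ψ w := rfl

theorem sat_bel : Sat G (.bel T X φ) = G.Believes T X (Sat G φ) := rfl

theorem sat_str : Sat G (.str C T X φ) = G.CanEnforce C T X (Sat G φ) := by
  funext w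
  have := G.delta_nonempty
  refine propext ⟨fun ⟨s, hs⟩ => ?_, fun ⟨σ, hσ⟩ => ⟨fun a => σ a, hσ⟩⟩
  obtain ⟨σ, rfl⟩ := Subtype.exists_pi_extension (α := fun _ => G.Δ) s
  exact ⟨σ, hs⟩

end Sat

theorem Tautology.sat {φ : Formula P V A} (h : Tautology φ) (G : Game P V A) (w : G.W) :
    Sat G φ w :=
  h (fun ψ => Sat G ψ w) (fun _ => Iff.rfl) (fun _ _ => Iff.rfl)

/-- Soundness: if ⊢ φ then w ⊨ φ for each state w of an arbitrary game. -/
theorem soundness {P V A : Type} {φ : Formula P V A} (h : Thm φ) :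
    ∀ (G : Game P V A) (w : G.W), Sat G φ w := by
  intro G w
  induction h generalizing w <;> try simp only [sat_neg, sat_imp, sat_bel, sat_str]
  case taut hφ => exact hφ.sat G w
  case truth => exact fun hB => hB.holds (Set.empty_subset _)
  case negIntro => exact Game.believes_not_believes
  case distrib => exact Game.Believes.mp
  case trust => exact Game.believes_believes_imp
  case monoB hT hX => exact fun hB => hB.mono hT hX
  case monoS hT hX hC => exact fun hS => hS.mono hC hT hX
  case coop hCD => exact Game.CanEnforce.mp (Set.disjoint_iff_inter_eq_empty.mpr hCD)
  case strIntro₁ => exact Game.believes_canEnforce_iff.mpr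
  case strIntro₂ => exact Game.believes_canEnforce_iff.mp
  case unavoid => exact Game.Believes.canEnforce_empty
  case pub => exact Game.canEnforce_empty_of_believes_empty
  case mp ih_imp ih => exact ih_imp w (ih w)
  case nec ih => exact Game.believes_of_forall ih
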